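/- In lossless transmission of arbitrarily correlated sources (S1, S2) over a DM two-way channel p(y1,y2|x1,x2) with general (adaptive) encoders, if source-channel rate b is achievable, then there exists a joint input distribution p(x1,x2) on X1 × X2 such that H(S1|S2) ≤ b·I(X1;Y2|X2) and H(S2|S1) ≤ b·I(X2;Y1|X1), where (Y1, Y2) is obtained from (X1, X2) through the per-letter channel law p(y1,y2|x1,x2). -/

import Mathlib

open scoped BigOperators Classical

noncomputable section

/-- Probability that the random variable `X` equals `a`, under the pmf `μ`
on the finite sample space `Ω`. -/
def prD {Ω α : Type} [Fintype Ω] (μ : Ω → ℝ) (X : Ω → α) (a : α) : ℝ :=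
  ∑ ω, if X ω = a then μ ω else 0

/-- Shannon entropy (in nats) of the random variable `X` under the pmf `μ`. -/
def ent {Ω α : Type} [Fintype Ω] [Fintype α] (μ : Ω → ℝ) (X : Ω → α) : ℝ :=
  -∑ a, prD μ X a * Real.log (prD μ X a)

/-- Conditional entropy `H(X | Y)` under the pmf `μ`. -/
def condEnt {Ω α β : Type} [Fintype Ω] [Fintype α] [Fintype β]
    (μ : Ω → ℝ) (X : Ω → α) (Y : Ω → β) : ℝ :=
  ent μ (fun ω => (X ω, Y ω)) - ent μ Y

/-- Mutual information `I(X ; Y)` under the pmf `μ`. -/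
def mutInf {Ω α β : Type} [Fintype Ω] [Fintype α] [Fintype β]
    (μ : Ω → ℝ) (X : Ω → α) (Y : Ω → β) : ℝ :=
  ent μ X + ent μ Y - ent μ (fun ω => (X ω, Y ω))

/-- Conditional mutual information `I(X ; Y | Z)` under the pmf `μ`. -/
def condMutInf {Ω α β γ : Type} [Fintype Ω] [Fintype α] [Fintype β] [Fintype γ]
    (μ : Ω → ℝ) (X : Ω → α) (Y : Ω → β) (Z : Ω → γ) : ℝ :=
  condEnt μ X Z - condEnt μ X (fun ω => (Y ω, Z ω))

/-- `p` is a probability mass function on the finite type `α`. -/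
def IsPmf {α : Type} [Fintype α] (p : α → ℝ) : Prop :=
  (∀ a, 0 ≤ p a) ∧ ∑ a, p a = 1

/-- The channel input at time `i` produced by an adaptive two-way encoder `f`,
which maps the user's source block and the user's past channel outputs to a
channel input symbol. -/
def twInput {S X Y : Type} {m n : ℕ}
    (f : ∀ i : Fin n, (Fin m → S) → (Fin i → Y) → X)
    (sb : Fin m → S) (yb : Fin n → Y) (i : Fin n) : X :=
  f i sb (fun k => yb ⟨k.1, k.2.trans i.2⟩)

/-- Joint distribution of the source blocks and the channel output blocks of a
two-way channel driven by the adaptive encoders `f1, f2`. -/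
def twMeasureAdaptive {S1 S2 X1 X2 Y1 Y2 : Type} [Fintype S1] [Fintype S2]
    (pS : S1 × S2 → ℝ) (chan : X1 → X2 → Y1 × Y2 → ℝ) (m n : ℕ)
    (f1 : ∀ i : Fin n, (Fin m → S1) → (Fin i → Y1) → X1)
    (f2 : ∀ i : Fin n, (Fin m → S2) → (Fin i → Y2) → X2) :
    (Fin m → S1 × S2) × (Fin n → Y1 × Y2) → ℝ :=
  fun ω => (∏ i, pS (ω.1 i)) *
    ∏ j, chan (twInput f1 (fun i => (ω.1 i).1) (fun j' => (ω.2 j').1) j)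
      (twInput f2 (fun i => (ω.1 i).2) (fun j' => (ω.2 j').2) j) (ω.2 j)

/-- Average error probability for the two-way channel with adaptive encoders. -/
def twErrAdaptive {S1 S2 X1 X2 Y1 Y2 : Type} [Fintype S1] [Fintype S2]
    [Fintype X1] [Fintype X2] [Fintype Y1] [Fintype Y2]
    (pS : S1 × S2 → ℝ) (chan : X1 → X2 → Y1 × Y2 → ℝ) (m n : ℕ)
    (f1 : ∀ i : Fin n, (Fin m → S1) → (Fin i → Y1) → X1)
    (f2 : ∀ i : Fin n, (Fin m → S2) → (Fin i → Y2) → X2)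
    (g1 : (Fin m → S1) → (Fin n → Y1) → Fin m → S2)
    (g2 : (Fin m → S2) → (Fin n → Y2) → Fin m → S1) : ℝ :=
  ∑ ω : (Fin m → S1 × S2) × (Fin n → Y1 × Y2),
    twMeasureAdaptive pS chan m n f1 f2 ω *
    (if g1 (fun i => (ω.1 i).1) (fun j => (ω.2 j).1) = (fun i => (ω.1 i).2)
        ∧ g2 (fun i => (ω.1 i).2) (fun j => (ω.2 j).2) = (fun i => (ω.1 i).1)
      then 0 else 1)

/-- Source-channel rate `b` is achievable over the two-way channel with general
(adaptive) encoders. -/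
def twAchievableAdaptive {S1 S2 X1 X2 Y1 Y2 : Type} [Fintype S1] [Fintype S2]
    [Fintype X1] [Fintype X2] [Fintype Y1] [Fintype Y2]
    (pS : S1 × S2 → ℝ) (chan : X1 → X2 → Y1 × Y2 → ℝ) (b : ℝ) : Prop :=
  ∀ ε : ℝ, 0 < ε → ∃ m n : ℕ, 0 < m ∧ 0 < n ∧ (n : ℝ) = b * m ∧
    ∃ (f1 : ∀ i : Fin n, (Fin m → S1) → (Fin i → Y1) → X1)
      (f2 : ∀ i : Fin n, (Fin m → S2) → (Fin i → Y2) → X2)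
      (g1 : (Fin m → S1) → (Fin n → Y1) → Fin m → S2)
      (g2 : (Fin m → S2) → (Fin n → Y2) → Fin m → S1),
      twErrAdaptive pS chan m n f1 f2 g1 g2 < ε

set_option linter.unusedSectionVars false

section Sequential

variable {A : Type}

/-- The strict past of position `j` in the word `y`. -/
def past {n : ℕ} (y : Fin n → A) (j : Fin n) : Fin j → A :=
  fun k => y ⟨k.1, k.2.trans j.2⟩

/-- The weight of a word under a family of kernels, each depending on the strict past. -/
def seqWeight {n : ℕ} (K : ∀ j : Fin n, (Fin j → A) → A → ℝ) (y : Fin n → A) : ℝ :=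
  ∏ j, K j (past y j) (y j)

/-- The kernel family with its last member removed. -/
def initKernel {n : ℕ} (K : ∀ j : Fin (n + 1), (Fin j → A) → A → ℝ) :
    ∀ j : Fin n, (Fin j → A) → A → ℝ :=
  fun j => K j.castSucc

lemma past_snoc_castSucc {n : ℕ} (y : Fin n → A) (a : A) (j : Fin n) :
    past (Fin.snoc (α := fun _ => A) y a) j.castSucc = past y j := by
  funext k
  have : (⟨k.1, k.2.trans j.castSucc.2⟩ : Fin (n + 1)) =
    Fin.castSucc ⟨k.1, k.2.trans j.2⟩ := rfl
  simp only [past]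
  rw [this]
  exact Fin.snoc_castSucc (α := fun _ => A) a y _

lemma past_snoc_last {n : ℕ} (y : Fin n → A) (a : A) :
    past (Fin.snoc (α := fun _ => A) y a) (Fin.last n) = y := by
  funext k
  exact Fin.snoc_castSucc (α := fun _ => A) a y k

lemma seqWeight_snoc {n : ℕ} (K : ∀ j : Fin (n + 1), (Fin j → A) → A → ℝ)
    (y : Fin n → A) (a : A) :
    seqWeight K (Fin.snoc (α := fun _ => A) y a) =
      seqWeight (initKernel K) y * K (Fin.last n) y a := by
  unfold seqWeight
  rw [Fin.prod_univ_castSucc, past_snoc_last, Fin.snoc_last]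
  congr 1
  refine Finset.prod_congr rfl fun j _ => ?_
  rw [past_snoc_castSucc, Fin.snoc_castSucc]
  rfl

lemma seqWeight_nonneg {n : ℕ} (K : ∀ j : Fin n, (Fin j → A) → A → ℝ)
    (h0 : ∀ j p a, 0 ≤ K j p a) (y : Fin n → A) : 0 ≤ seqWeight K y :=
  Finset.prod_nonneg fun j _ => h0 j _ _

variable [Fintype A]

lemma sum_snoc {n : ℕ} (F : (Fin (n + 1) → A) → ℝ) :
    ∑ y, F y = ∑ y : Fin n → A, ∑ a, F (Fin.snoc (α := fun _ => A) y a) := by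
  rw [← (Fin.snocEquiv (fun _ : Fin (n + 1) => A)).sum_comp, Fintype.sum_prod_type_right]
  rfl

lemma sum_seqWeight_le_one {n : ℕ} (K : ∀ j : Fin n, (Fin j → A) → A → ℝ)
    (h0 : ∀ j p a, 0 ≤ K j p a) (h1 : ∀ j p, ∑ a, K j p a ≤ 1) :
    ∑ y, seqWeight K y ≤ 1 := by
  induction n with
  | zero => simp [seqWeight]
  | succ n ih =>
    rw [sum_snoc]
    simp only [seqWeight_snoc, ← Finset.mul_sum]
    refine le_trans (Finset.sum_le_sum fun y _ => ?_)
      (ih (initKernel K) (fun j => h0 j.castSucc) (fun j => h1 j.castSucc))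
    exact mul_le_of_le_one_right
      (seqWeight_nonneg _ (fun j => h0 j.castSucc) y) (h1 _ _)

lemma sum_seqWeight_eq_one {n : ℕ} (K : ∀ j : Fin n, (Fin j → A) → A → ℝ)
    (h1 : ∀ j p, ∑ a, K j p a = 1) : ∑ y, seqWeight K y = 1 := by
  induction n with
  | zero => simp [seqWeight]
  | succ n ih =>
    rw [sum_snoc]
    simp only [seqWeight_snoc, ← Finset.mul_sum, h1, mul_one]
    exact ih (initKernel K) (fun j => h1 j.castSucc)

/-- Given the past, the letter at position `j` is distributed according to `K j`. -/
lemma sum_seqWeight_mul {n : ℕ} (K : ∀ j : Fin n, (Fin j → A) → A → ℝ)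
    (h1 : ∀ j p, ∑ a, K j p a = 1) (j : Fin n) (F : (Fin j → A) → A → ℝ) :
    ∑ y, seqWeight K y * F (past y j) (y j) =
      ∑ y, seqWeight K y * ∑ a, K j (past y j) a * F (past y j) a := by
  induction n with
  | zero => exact j.elim0
  | succ n ih =>
    rw [sum_snoc, sum_snoc (fun y => seqWeight K y * _)]
    induction j using Fin.lastCases with
    | last =>
      refine Finset.sum_congr rfl fun y _ => ?_
      simp only [seqWeight_snoc, past_snoc_last, Fin.snoc_last, ← Finset.sum_mul,
        ← Finset.mul_sum, h1, one_mul, mul_assoc]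
    | cast j =>
      simp only [seqWeight_snoc, past_snoc_castSucc, Fin.snoc_castSucc]
      have key : ∀ y (c : ℝ), ∑ a, seqWeight (initKernel K) y * K (Fin.last n) y a * c =
          seqWeight (initKernel K) y * c := fun y c => by
        rw [← Finset.sum_mul, ← Finset.mul_sum, h1, mul_one]
      simp only [key]
      exact ih (initKernel K) (fun j => h1 j.castSucc) j F

end Sequential

section Entropy

variable {Ω α β : Type} [Fintype Ω]

/-- Gibbs' inequality. -/
lemma gibbs (μ ν : Ω → ℝ) (hμ : ∀ ω, 0 ≤ μ ω) (hμ1 : ∑ ω, μ ω = 1)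
    (hν : ∀ ω, 0 ≤ ν ω) (hν1 : ∑ ω, ν ω ≤ 1) (hpos : ∀ ω, 0 < μ ω → 0 < ν ω) :
    ∑ ω, μ ω * (Real.log (ν ω) - Real.log (μ ω)) ≤ 0 := by
  have h : ∀ ω, μ ω * (Real.log (ν ω) - Real.log (μ ω)) ≤ ν ω - μ ω := by
    intro ω
    rcases (hμ ω).eq_or_lt with h | h
    · rw [← h]; simpa using hν ω
    · have h' := hpos ω h
      rw [← Real.log_div h'.ne' h.ne']
      have := Real.log_le_sub_one_of_pos (div_pos h' h)
      calc _ ≤ μ ω * (ν ω / μ ω - 1) := by gcongr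
        _ = _ := by field_simp
  refine (Finset.sum_le_sum fun ω _ => h ω).trans ?_
  rw [Finset.sum_sub_distrib]
  linarith

lemma prD_nonneg {μ : Ω → ℝ} (hμ : ∀ ω, 0 ≤ μ ω) (X : Ω → α) (a : α) : 0 ≤ prD μ X a :=
  Finset.sum_nonneg fun ω _ => by split_ifs <;> simp [hμ]

lemma prD_pos {μ : Ω → ℝ} (hμ : ∀ ω, 0 ≤ μ ω) (X : Ω → α) {ω : Ω} (h : 0 < μ ω) :
    0 < prD μ X (X ω) := by
  refine h.trans_le ?_
  have := Finset.single_le_sum (f := fun ω' => if X ω' = X ω then μ ω' else 0)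
    (fun ω' _ => by split_ifs <;> simp [hμ]) (Finset.mem_univ ω)
  simpa [prD] using this

variable [Fintype α]

lemma sum_prD_mul (μ : Ω → ℝ) (X : Ω → α) (φ : α → ℝ) :
    ∑ a, prD μ X a * φ a = ∑ ω, μ ω * φ (X ω) := by
  simp only [prD, Finset.sum_mul, ite_mul, zero_mul]
  rw [Finset.sum_comm]
  simp

lemma ent_eq_sum (μ : Ω → ℝ) (X : Ω → α) :
    ent μ X = -∑ ω, μ ω * Real.log (prD μ X (X ω)) := by
  rw [ent, sum_prD_mul μ X (fun a => Real.log (prD μ X a))]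

lemma sum_prD_pair (μ : Ω → ℝ) (X : Ω → α) (Y : Ω → β) (b : β) :
    ∑ a, prD μ (fun ω => (X ω, Y ω)) (a, b) = prD μ Y b := by
  simp only [prD, Prod.mk.injEq, ite_and]
  rw [Finset.sum_comm]
  simp

variable [Fintype β]

lemma ent_comp_equiv {Ω' : Type} [Fintype Ω'] (e : Ω' ≃ Ω) (μ : Ω → ℝ) (X : Ω → α) :
    ent (fun ω => μ (e ω)) (fun ω => X (e ω)) = ent μ X := by
  have : ∀ a, prD (fun ω => μ (e ω)) (fun ω => X (e ω)) a = prD μ X a := fun a =>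
    e.sum_comp (fun ω => if X ω = a then μ ω else 0)
  simp only [ent, this]

lemma condEnt_comp_equiv {Ω' : Type} [Fintype Ω'] (e : Ω' ≃ Ω) (μ : Ω → ℝ)
    (X : Ω → α) (Y : Ω → β) :
    condEnt (fun ω => μ (e ω)) (fun ω => X (e ω)) (fun ω => Y (e ω)) = condEnt μ X Y := by
  unfold condEnt
  rw [ent_comp_equiv e μ Y, ent_comp_equiv e μ (fun ω => (X ω, Y ω))]

lemma condMutInf_comp_equiv {Ω' γ : Type} [Fintype Ω'] [Fintype γ] (e : Ω' ≃ Ω)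
    (μ : Ω → ℝ) (X : Ω → α) (Y : Ω → β) (Z : Ω → γ) :
    condMutInf (fun ω => μ (e ω)) (fun ω => X (e ω)) (fun ω => Y (e ω)) (fun ω => Z (e ω)) =
      condMutInf μ X Y Z := by
  unfold condMutInf
  rw [condEnt_comp_equiv e μ X Z, condEnt_comp_equiv e μ X (fun ω => (Y ω, Z ω))]

lemma continuous_ent {T : Type} [TopologicalSpace T] (μ : T → Ω → ℝ)
    (hμ : ∀ ω, Continuous fun t => μ t ω) (X : Ω → α) : Continuous fun t => ent (μ t) X := by
  refine (continuous_finsetSum _ fun a _ => ?_).neg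
  refine Real.continuous_mul_log.comp (continuous_finsetSum _ fun ω _ => ?_)
  split_ifs
  · exact hμ ω
  · exact continuous_const

lemma continuous_condMutInf {T γ : Type} [Fintype γ] [TopologicalSpace T] (μ : T → Ω → ℝ)
    (hμ : ∀ ω, Continuous fun t => μ t ω) (X : Ω → α) (Y : Ω → β) (Z : Ω → γ) :
    Continuous fun t => condMutInf (μ t) X Y Z := by
  unfold condMutInf condEnt
  exact ((continuous_ent μ hμ _).sub (continuous_ent μ hμ _)).sub
    ((continuous_ent μ hμ _).sub (continuous_ent μ hμ _))

end Entropy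

section Letter

variable {X1 X2 Y1 Y2 : Type} [Fintype X1] [Fintype X2] [Fintype Y1] [Fintype Y2]

/-- Joint law of the inputs and the outputs in one channel use. -/
def letterLaw (chan : X1 → X2 → Y1 × Y2 → ℝ) (pX : X1 × X2 → ℝ) :
    (X1 × X2) × (Y1 × Y2) → ℝ :=
  fun z => pX z.1 * chan z.1.1 z.1.2 z.2

/-- The law of the second output given both inputs. -/
def outLaw (chan : X1 → X2 → Y1 × Y2 → ℝ) (x1 : X1) (x2 : X2) (y2 : Y2) : ℝ :=
  ∑ y1, chan x1 x2 (y1, y2)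

/-- The law of the second output given the second input. -/
def outLawGiven (chan : X1 → X2 → Y1 × Y2 → ℝ) (pX : X1 × X2 → ℝ) (x2 : X2) (y2 : Y2) : ℝ :=
  prD (letterLaw chan pX) (fun z => (z.2.2, z.1.2)) (y2, x2) /
    prD (letterLaw chan pX) (fun z => z.1.2) x2

variable {chan : X1 → X2 → Y1 × Y2 → ℝ} {pX : X1 × X2 → ℝ}

lemma letterLaw_nonneg (hchan : ∀ x1 x2, IsPmf (chan x1 x2)) (hpX : ∀ x, 0 ≤ pX x)
    (z : (X1 × X2) × (Y1 × Y2)) : 0 ≤ letterLaw chan pX z :=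
  mul_nonneg (hpX _) ((hchan _ _).1 _)

lemma outLaw_nonneg (hchan : ∀ x1 x2, IsPmf (chan x1 x2)) (x1 : X1) (x2 : X2) (y2 : Y2) :
    0 ≤ outLaw chan x1 x2 y2 :=
  Finset.sum_nonneg fun _ _ => (hchan _ _).1 _

lemma outLaw_pos (hchan : ∀ x1 x2, IsPmf (chan x1 x2)) {x1 : X1} {x2 : X2} {y : Y1 × Y2}
    (h : 0 < chan x1 x2 y) : 0 < outLaw chan x1 x2 y.2 :=
  h.trans_le (Finset.single_le_sum (f := fun y1 => chan x1 x2 (y1, y.2))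
    (fun _ _ => (hchan _ _).1 _) (Finset.mem_univ y.1))

lemma outLawGiven_nonneg (hchan : ∀ x1 x2, IsPmf (chan x1 x2)) (hpX : ∀ x, 0 ≤ pX x)
    (x2 : X2) (y2 : Y2) : 0 ≤ outLawGiven chan pX x2 y2 :=
  div_nonneg (prD_nonneg (letterLaw_nonneg hchan hpX) _ _)
    (prD_nonneg (letterLaw_nonneg hchan hpX) _ _)

lemma sum_outLawGiven_le_one (x2 : X2) : ∑ y2, outLawGiven chan pX x2 y2 ≤ 1 := by
  unfold outLawGiven
  rw [← Finset.sum_div, sum_prD_pair]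
  exact div_self_le_one _

lemma outLawGiven_pos (hchan : ∀ x1 x2, IsPmf (chan x1 x2)) (hpX : ∀ x, 0 ≤ pX x)
    {z : (X1 × X2) × (Y1 × Y2)} (h : 0 < letterLaw chan pX z) :
    0 < outLawGiven chan pX z.1.2 z.2.2 :=
  div_pos (prD_pos (letterLaw_nonneg hchan hpX) (fun z => (z.2.2, z.1.2)) h)
    (prD_pos (letterLaw_nonneg hchan hpX) (fun z => z.1.2) h)

lemma prD_inputs (hchan : ∀ x1 x2, IsPmf (chan x1 x2)) (x1 : X1) (x2 : X2) :
    prD (letterLaw chan pX) (fun z => (z.1.1, z.1.2)) (x1, x2) = pX (x1, x2) := by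
  unfold prD letterLaw
  rw [Fintype.sum_prod_type, Finset.sum_eq_single (x1, x2)]
  · simp [← Finset.mul_sum, (hchan x1 x2).2]
  · intro x _ hx
    simp [hx]
  · simp

lemma prD_inputs_output (x1 : X1) (x2 : X2) (y2 : Y2) :
    prD (letterLaw chan pX) (fun z => (z.1.1, (z.2.2, z.1.2))) (x1, (y2, x2)) =
      pX (x1, x2) * outLaw chan x1 x2 y2 := by
  unfold prD letterLaw outLaw
  rw [Fintype.sum_prod_type, Finset.sum_eq_single (x1, x2)]
  · simp [Fintype.sum_prod_type, Finset.mul_sum]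
  · rintro ⟨a, b⟩ _ hx
    refine Finset.sum_eq_zero fun y _ => if_neg ?_
    rintro h
    simp_all
  · simp

lemma condMutInf_letterLaw (hchan : ∀ x1 x2, IsPmf (chan x1 x2)) (hpX : ∀ x, 0 ≤ pX x) :
    condMutInf (letterLaw chan pX) (fun z => z.1.1) (fun z => z.2.2) (fun z => z.1.2) =
      ∑ z, letterLaw chan pX z *
        (Real.log (outLaw chan z.1.1 z.1.2 z.2.2) -
          Real.log (outLawGiven chan pX z.1.2 z.2.2)) := by
  simp only [condMutInf, condEnt, ent_eq_sum]
  rw [← sub_eq_zero]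
  simp only [neg_sub_neg, ← Finset.sum_sub_distrib]
  refine Finset.sum_eq_zero fun z _ => ?_
  rcases (letterLaw_nonneg hchan hpX z).eq_or_lt with h | h
  · simp [← h]
  have hn := letterLaw_nonneg hchan hpX
  have h1 : 0 < pX z.1 := (hpX _).lt_of_ne fun h' => by simp [letterLaw, ← h'] at h
  have h2 : 0 < chan z.1.1 z.1.2 z.2 :=
    ((hchan _ _).1 _).lt_of_ne fun h' => by simp [letterLaw, ← h'] at h
  have h3 := prD_pos hn (fun z => (z.2.2, z.1.2)) h
  have h4 := prD_pos hn (fun z => z.1.2) h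
  rw [prD_inputs hchan, prD_inputs_output, Real.log_mul h1.ne' (outLaw_pos hchan h2).ne',
    outLawGiven, Real.log_div h3.ne' h4.ne']
  ring

end Letter

section TwoWay

variable {S1 S2 X1 X2 Y1 Y2 : Type} [Fintype S1] [Fintype S2] [Fintype X1] [Fintype X2]
  [Fintype Y1] [Fintype Y2] {m n : ℕ}

/-- The law of the outputs at time `j` given the source blocks and the past outputs. -/
def twKernel (chan : X1 → X2 → Y1 × Y2 → ℝ)
    (f1 : ∀ i : Fin n, (Fin m → S1) → (Fin i → Y1) → X1)
    (f2 : ∀ i : Fin n, (Fin m → S2) → (Fin i → Y2) → X2) (s : Fin m → S1 × S2) :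
    ∀ j : Fin n, (Fin j → Y1 × Y2) → Y1 × Y2 → ℝ :=
  fun j p a => chan (f1 j (fun i => (s i).1) fun k => (p k).1)
    (f2 j (fun i => (s i).2) fun k => (p k).2) a

/-- The input of the first user at time `j`, as a random variable. -/
def inputOne (f1 : ∀ i : Fin n, (Fin m → S1) → (Fin i → Y1) → X1) (j : Fin n)
    (ω : (Fin m → S1 × S2) × (Fin n → Y1 × Y2)) : X1 :=
  twInput f1 (fun i => (ω.1 i).1) (fun k => (ω.2 k).1) j

/-- The input of the second user at time `j`, as a random variable. -/
def inputTwo (f2 : ∀ i : Fin n, (Fin m → S2) → (Fin i → Y2) → X2) (j : Fin n)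
    (ω : (Fin m → S1 × S2) × (Fin n → Y1 × Y2)) : X2 :=
  twInput f2 (fun i => (ω.1 i).2) (fun k => (ω.2 k).2) j

/-- The time average of the laws of the channel inputs. -/
def avgInput (pS : S1 × S2 → ℝ) (chan : X1 → X2 → Y1 × Y2 → ℝ)
    (f1 : ∀ i : Fin n, (Fin m → S1) → (Fin i → Y1) → X1)
    (f2 : ∀ i : Fin n, (Fin m → S2) → (Fin i → Y2) → X2) (x : X1 × X2) : ℝ :=
  (n : ℝ)⁻¹ * ∑ j, prD (twMeasureAdaptive pS chan m n f1 f2)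
    (fun ω => (inputOne f1 j ω, inputTwo f2 j ω)) x

variable {pS : S1 × S2 → ℝ} {chan : X1 → X2 → Y1 × Y2 → ℝ}
  (f1 : ∀ i : Fin n, (Fin m → S1) → (Fin i → Y1) → X1)
  (f2 : ∀ i : Fin n, (Fin m → S2) → (Fin i → Y2) → X2)

lemma twMeasureAdaptive_eq (ω : (Fin m → S1 × S2) × (Fin n → Y1 × Y2)) :
    twMeasureAdaptive pS chan m n f1 f2 ω =
      seqWeight (fun _ _ a => pS a) ω.1 * seqWeight (twKernel chan f1 f2 ω.1) ω.2 := rfl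

lemma sum_twKernel (hchan : ∀ x1 x2, IsPmf (chan x1 x2)) (s : Fin m → S1 × S2) (j : Fin n)
    (p : Fin j → Y1 × Y2) : ∑ a, twKernel chan f1 f2 s j p a = 1 :=
  (hchan _ _).2

lemma twMeasureAdaptive_nonneg (hpS : IsPmf pS) (hchan : ∀ x1 x2, IsPmf (chan x1 x2))
    (ω : (Fin m → S1 × S2) × (Fin n → Y1 × Y2)) :
    0 ≤ twMeasureAdaptive pS chan m n f1 f2 ω :=
  mul_nonneg (Finset.prod_nonneg fun _ _ => hpS.1 _)
    (Finset.prod_nonneg fun _ _ => (hchan _ _).1 _)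

lemma sum_twMeasureAdaptive_mul_source (hchan : ∀ x1 x2, IsPmf (chan x1 x2))
    (h : (Fin m → S1 × S2) → ℝ) :
    ∑ ω, twMeasureAdaptive pS chan m n f1 f2 ω * h ω.1 =
      ∑ s, seqWeight (fun _ _ a => pS a) s * h s := by
  rw [Fintype.sum_prod_type]
  refine Finset.sum_congr rfl fun s _ => ?_
  simp only [twMeasureAdaptive_eq]
  rw [← Finset.sum_mul, ← Finset.mul_sum,
    sum_seqWeight_eq_one _ (sum_twKernel f1 f2 hchan s), mul_one]

lemma sum_twMeasureAdaptive (hpS : IsPmf pS) (hchan : ∀ x1 x2, IsPmf (chan x1 x2)) :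
    ∑ ω, twMeasureAdaptive pS chan m n f1 f2 ω = 1 := by
  have := sum_twMeasureAdaptive_mul_source (pS := pS) f1 f2 hchan fun _ => 1
  simp only [mul_one] at this
  rw [this, sum_seqWeight_eq_one _ fun _ _ => hpS.2]

lemma sum_twMeasureAdaptive_mul_sum_source (hpS : IsPmf pS)
    (hchan : ∀ x1 x2, IsPmf (chan x1 x2)) (h : S1 × S2 → ℝ) :
    ∑ ω, twMeasureAdaptive pS chan m n f1 f2 ω * ∑ i, h (ω.1 i) =
      m * ∑ s, pS s * h s := by
  rw [sum_twMeasureAdaptive_mul_source f1 f2 hchan fun s => ∑ i, h (s i)]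
  simp only [Finset.mul_sum]
  rw [Finset.sum_comm]
  have key : ∀ i : Fin m, ∑ s, seqWeight (fun _ _ a => pS a) s * h (s i) =
      ∑ s, pS s * h s := fun i => by
    rw [sum_seqWeight_mul (fun _ _ a => pS a) (fun _ _ => hpS.2) i fun _ a => h a,
      ← Finset.sum_mul, sum_seqWeight_eq_one _ fun _ _ => hpS.2, one_mul]
  simp [key, Finset.mul_sum]

lemma sum_twMeasureAdaptive_mul_letter (hchan : ∀ x1 x2, IsPmf (chan x1 x2)) (j : Fin n)
    (φ : X1 × X2 → Y1 × Y2 → ℝ) :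
    ∑ ω, twMeasureAdaptive pS chan m n f1 f2 ω *
        φ (inputOne f1 j ω, inputTwo f2 j ω) (ω.2 j) =
      ∑ x, prD (twMeasureAdaptive pS chan m n f1 f2)
        (fun ω => (inputOne f1 j ω, inputTwo f2 j ω)) x * ∑ y, chan x.1 x.2 y * φ x y := by
  rw [sum_prD_mul _ _ fun x : X1 × X2 => ∑ y, chan x.1 x.2 y * φ x y, Fintype.sum_prod_type,
    Fintype.sum_prod_type]
  refine Finset.sum_congr rfl fun s _ => ?_
  simp only [twMeasureAdaptive_eq, mul_assoc, ← Finset.mul_sum]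
  congr 1
  exact sum_seqWeight_mul (twKernel chan f1 f2 s) (sum_twKernel f1 f2 hchan s) j
    fun p a => φ (f1 j (fun i => (s i).1) fun k => (p k).1,
      f2 j (fun i => (s i).2) fun k => (p k).2) a

lemma sum_twMeasureAdaptive_mul_sum_letter (hn : 0 < n)
    (hchan : ∀ x1 x2, IsPmf (chan x1 x2)) (φ : X1 × X2 → Y1 × Y2 → ℝ) :
    ∑ ω, twMeasureAdaptive pS chan m n f1 f2 ω *
        ∑ j, φ (inputOne f1 j ω, inputTwo f2 j ω) (ω.2 j) =
      n * ∑ z, letterLaw chan (avgInput pS chan f1 f2) z * φ z.1 z.2 := by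
  have hn' : (n : ℝ) ≠ 0 := by positivity
  have hl : ∑ ω, twMeasureAdaptive pS chan m n f1 f2 ω *
        ∑ j, φ (inputOne f1 j ω, inputTwo f2 j ω) (ω.2 j) =
      ∑ x : X1 × X2, ∑ j, prD (twMeasureAdaptive pS chan m n f1 f2)
        (fun ω => (inputOne f1 j ω, inputTwo f2 j ω)) x * ∑ y, chan x.1 x.2 y * φ x y := by
    simp only [Finset.mul_sum (ι := Fin n)]
    rw [Finset.sum_comm]
    simp only [sum_twMeasureAdaptive_mul_letter f1 f2 hchan]
    rw [Finset.sum_comm]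
  rw [hl, Fintype.sum_prod_type (f := fun z => letterLaw chan (avgInput pS chan f1 f2) z * _),
    Finset.mul_sum]
  refine Finset.sum_congr rfl fun x _ => ?_
  rw [← Finset.sum_mul]
  simp only [letterLaw, avgInput, mul_assoc, ← Finset.mul_sum]
  rw [mul_inv_cancel_left₀ hn']

lemma avgInput_nonneg (hpS : IsPmf pS) (hchan : ∀ x1 x2, IsPmf (chan x1 x2)) (x : X1 × X2) :
    0 ≤ avgInput pS chan f1 f2 x :=
  mul_nonneg (by positivity) (Finset.sum_nonneg fun _ _ =>
    prD_nonneg (twMeasureAdaptive_nonneg f1 f2 hpS hchan) _ _)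

lemma isPmf_avgInput (hn : 0 < n) (hpS : IsPmf pS) (hchan : ∀ x1 x2, IsPmf (chan x1 x2)) :
    IsPmf (avgInput pS chan f1 f2) := by
  refine ⟨avgInput_nonneg f1 f2 hpS hchan, ?_⟩
  have := sum_twMeasureAdaptive_mul_sum_letter (pS := pS) f1 f2 hn hchan fun _ _ => 1
  have hn' : (n : ℝ) ≠ 0 := by positivity
  rw [← Finset.sum_mul, sum_twMeasureAdaptive f1 f2 hpS hchan, Fintype.sum_prod_type] at this
  simp only [letterLaw, mul_one, Finset.sum_const, Finset.card_univ, Fintype.card_fin,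
    nsmul_eq_mul, ← Finset.mul_sum, (hchan _ _).2, one_mul] at this
  exact (mul_left_cancel₀ hn' ((mul_one _).trans this)).symm

lemma avgInput_pos (hpS : IsPmf pS) (hchan : ∀ x1 x2, IsPmf (chan x1 x2))
    {ω : (Fin m → S1 × S2) × (Fin n → Y1 × Y2)}
    (h : 0 < twMeasureAdaptive pS chan m n f1 f2 ω) (j : Fin n) :
    0 < avgInput pS chan f1 f2 (inputOne f1 j ω, inputTwo f2 j ω) := by
  have hμ := twMeasureAdaptive_nonneg f1 f2 hpS hchan
  have hn : 0 < (n : ℝ) := by exact_mod_cast j.pos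
  refine mul_pos (inv_pos.2 hn) ((prD_pos hμ
    (fun ω => (inputOne f1 j ω, inputTwo f2 j ω)) h).trans_le ?_)
  exact Finset.single_le_sum (f := fun j' => prD (twMeasureAdaptive pS chan m n f1 f2)
    (fun ω => (inputOne f1 j' ω, inputTwo f2 j' ω)) (inputOne f1 j ω, inputTwo f2 j ω))
    (fun _ _ => prD_nonneg hμ _ _) (Finset.mem_univ j)

/-- A sub-probability guess of the first source block from what the second user knows:
the decoded block, mixed with the uniform law. -/
def guess (ε : ℝ) (g2 : (Fin m → S2) → (Fin n → Y2) → Fin m → S1)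
    (s2 : Fin m → S2) (y2 : Fin n → Y2) (s1 : Fin m → S1) : ℝ :=
  (if g2 s2 y2 = s1 then 1 - ε else 0) + ε / (Fintype.card S1 : ℝ) ^ m

lemma sum_guess [Nonempty S1] (ε : ℝ) (g2 : (Fin m → S2) → (Fin n → Y2) → Fin m → S1)
    (s2 : Fin m → S2) (y2 : Fin n → Y2) : ∑ s1, guess ε g2 s2 y2 s1 = 1 := by
  have : (Fintype.card S1 : ℝ) ^ m ≠ 0 := pow_ne_zero _ (by simp)
  simp only [guess, Finset.sum_add_distrib, Finset.sum_ite_eq, Finset.mem_univ, if_true,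
    Finset.sum_const, Finset.card_univ, nsmul_eq_mul, Fintype.card_fun, Fintype.card_fin,
    Nat.cast_pow]
  rw [mul_div_cancel₀ _ this]
  ring

lemma guess_pos [Nonempty S1] {ε : ℝ} (h0 : 0 < ε) (h1 : ε < 1)
    (g2 : (Fin m → S2) → (Fin n → Y2) → Fin m → S1)
    (s2 : Fin m → S2) (y2 : Fin n → Y2) (s1 : Fin m → S1) : 0 < guess ε g2 s2 y2 s1 := by
  have : 0 < (Fintype.card S1 : ℝ) ^ m := pow_pos (by simp [Fintype.card_pos]) _
  have h2 := div_pos h0 this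
  unfold guess
  split_ifs <;> linarith

lemma neg_log_guess_le [Nonempty S1] {ε : ℝ} (h0 : 0 < ε) (h1 : ε < 1)
    (g2 : (Fin m → S2) → (Fin n → Y2) → Fin m → S1)
    (s2 : Fin m → S2) (y2 : Fin n → Y2) (s1 : Fin m → S1) :
    -Real.log (guess ε g2 s2 y2 s1) ≤ -Real.log (1 - ε) +
      (if g2 s2 y2 = s1 then 0 else 1) * (-Real.log ε + m * Real.log (Fintype.card S1)) := by
  have hc : 0 < (Fintype.card S1 : ℝ) ^ m := pow_pos (by simp [Fintype.card_pos]) _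
  have h2 := div_pos h0 hc
  unfold guess
  split_ifs
  · have := Real.log_le_log (by linarith : 0 < 1 - ε)
      (by linarith : 1 - ε ≤ 1 - ε + ε / (Fintype.card S1 : ℝ) ^ m)
    linarith
  · have := Real.log_nonpos (by linarith : 0 ≤ 1 - ε) (by linarith)
    rw [zero_add, Real.log_div h0.ne' hc.ne', Real.log_pow]
    linarith

/-- The reference law on source and output blocks used in the converse. -/
def refMeasure (pS : S1 × S2 → ℝ) (chan : X1 → X2 → Y1 × Y2 → ℝ)
    (f1 : ∀ i : Fin n, (Fin m → S1) → (Fin i → Y1) → X1)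
    (f2 : ∀ i : Fin n, (Fin m → S2) → (Fin i → Y2) → X2)
    (g2 : (Fin m → S2) → (Fin n → Y2) → Fin m → S1) (ε : ℝ)
    (ω : (Fin m → S1 × S2) × (Fin n → Y1 × Y2)) : ℝ :=
  (∏ i, prD pS (fun s => s.2) (ω.1 i).2) *
    (∏ j, outLawGiven chan (avgInput pS chan f1 f2) (inputTwo f2 j ω) (ω.2 j).2) *
    guess ε g2 (fun i => (ω.1 i).2) (fun j => (ω.2 j).2) (fun i => (ω.1 i).1) *
    ∏ j, chan (inputOne f1 j ω) (inputTwo f2 j ω) (ω.2 j) /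
      outLaw chan (inputOne f1 j ω) (inputTwo f2 j ω) (ω.2 j).2

lemma sum_blocks (F : (Fin m → S1 × S2) × (Fin n → Y1 × Y2) → ℝ) :
    ∑ ω, F ω = ∑ s2 : Fin m → S2, ∑ y2 : Fin n → Y2, ∑ s1 : Fin m → S1, ∑ y1 : Fin n → Y1,
      F (fun i => (s1 i, s2 i), fun j => (y1 j, y2 j)) := by
  rw [Fintype.sum_prod_type,
    ← (Equiv.arrowProdEquivProdArrow (Fin m) (fun _ => S1) (fun _ => S2)).symm.sum_comp,
    Fintype.sum_prod_type_right]
  refine Finset.sum_congr rfl fun s2 _ => ?_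
  rw [Finset.sum_comm]
  rw [← (Equiv.arrowProdEquivProdArrow (Fin n) (fun _ => Y1) (fun _ => Y2)).symm.sum_comp,
    Fintype.sum_prod_type_right]
  refine Finset.sum_congr rfl fun y2 _ => ?_
  rw [Finset.sum_comm]
  rfl

lemma sum_refMeasure_le_one [Nonempty S1] (hpS : IsPmf pS)
    (hchan : ∀ x1 x2, IsPmf (chan x1 x2)) (g2 : (Fin m → S2) → (Fin n → Y2) → Fin m → S1)
    {ε : ℝ} (h0 : 0 < ε) (h1 : ε < 1) :
    ∑ ω, refMeasure pS chan f1 f2 g2 ε ω ≤ 1 := by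
  have hp2 : ∀ s2, 0 ≤ prD pS (fun s => s.2) s2 := prD_nonneg hpS.1 _
  have hav := avgInput_nonneg f1 f2 hpS hchan
  rw [sum_blocks]
  have hV : ∀ s1 s2 y2, ∑ y1 : Fin n → Y1, seqWeight
      (fun j (p : Fin j → Y1) a => chan (f1 j s1 p) (f2 j s2 (past y2 j)) (a, y2 j) /
        outLaw chan (f1 j s1 p) (f2 j s2 (past y2 j)) (y2 j)) y1 ≤ 1 := fun s1 s2 y2 =>
    sum_seqWeight_le_one _
      (fun j p a => div_nonneg ((hchan _ _).1 _) (outLaw_nonneg hchan _ _ _))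
      (fun j p => by rw [← Finset.sum_div]; exact div_self_le_one _)
  have hQ : ∀ s2, ∑ y2 : Fin n → Y2, seqWeight (fun j (p : Fin j → Y2) a =>
      outLawGiven chan (avgInput pS chan f1 f2) (f2 j s2 p) a) y2 ≤ 1 := fun s2 =>
    sum_seqWeight_le_one _ (fun j p a => outLawGiven_nonneg hchan hav _ _)
      (fun j p => sum_outLawGiven_le_one _)
  have hQ0 : ∀ s2 (y2 : Fin n → Y2), 0 ≤ seqWeight (fun j (p : Fin j → Y2) a =>
      outLawGiven chan (avgInput pS chan f1 f2) (f2 j s2 p) a) y2 := fun s2 =>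
    seqWeight_nonneg _ (fun j p a => outLawGiven_nonneg hchan hav _ _)
  have hS : ∑ s2 : Fin m → S2, seqWeight (fun _ _ a => prD pS (fun s => s.2) a) s2 ≤ 1 :=
    sum_seqWeight_le_one _ (fun _ _ a => hp2 a) fun _ _ => by
      have := sum_prD_mul pS (fun s => s.2) fun _ => 1
      simp only [mul_one] at this
      rw [this, hpS.2]
  have hS0 : ∀ s2 : Fin m → S2, 0 ≤ seqWeight (fun _ _ a => prD pS (fun s => s.2) a) s2 :=
    seqWeight_nonneg _ (fun _ _ a => hp2 a)
  refine le_trans (Finset.sum_le_sum fun s2 _ => ?_) hS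
  refine le_trans ?_ (mul_le_of_le_one_right (hS0 s2) (hQ s2))
  rw [Finset.mul_sum]
  refine Finset.sum_le_sum fun y2 _ => ?_
  set A := seqWeight (fun _ _ a => prD pS (fun s => s.2) a) s2
  set B := seqWeight (fun j (p : Fin j → Y2) a =>
    outLawGiven chan (avgInput pS chan f1 f2) (f2 j s2 p) a) y2
  calc
    _ = ∑ s1, A * B * guess ε g2 s2 y2 s1 * ∑ y1 : Fin n → Y1, seqWeight
      (fun j (p : Fin j → Y1) a => chan (f1 j s1 p) (f2 j s2 (past y2 j)) (a, y2 j) /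
        outLaw chan (f1 j s1 p) (f2 j s2 (past y2 j)) (y2 j)) y1 := by
        simp only [Finset.mul_sum]
        rfl
    _ ≤ ∑ s1, A * B * guess ε g2 s2 y2 s1 := Finset.sum_le_sum fun s1 _ =>
        mul_le_of_le_one_right (mul_nonneg (mul_nonneg (hS0 s2) (hQ0 s2 y2))
          (guess_pos h0 h1 g2 s2 y2 s1).le) (hV s1 s2 y2)
    _ = A * B := by rw [← Finset.mul_sum, sum_guess, mul_one]

/-- The slack in the converse at error probability `ε`. -/
def slack (M : ℕ) (ε : ℝ) : ℝ :=
  -Real.log (1 - ε) + (-(ε * Real.log ε) + ε * Real.log M)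

lemma log_refMeasure_sub [Nonempty S1] (hpS : IsPmf pS)
    (hchan : ∀ x1 x2, IsPmf (chan x1 x2)) (g2 : (Fin m → S2) → (Fin n → Y2) → Fin m → S1)
    {ε : ℝ} (h0 : 0 < ε) (h1 : ε < 1) {ω : (Fin m → S1 × S2) × (Fin n → Y1 × Y2)}
    (hω : 0 < twMeasureAdaptive pS chan m n f1 f2 ω) :
    0 < refMeasure pS chan f1 f2 g2 ε ω ∧
    Real.log (refMeasure pS chan f1 f2 g2 ε ω) -
        Real.log (twMeasureAdaptive pS chan m n f1 f2 ω) =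
      ∑ i, (Real.log (prD pS (fun s => s.2) (ω.1 i).2) - Real.log (pS (ω.1 i))) +
      Real.log (guess ε g2 (fun i => (ω.1 i).2) (fun j => (ω.2 j).2) (fun i => (ω.1 i).1)) -
      ∑ j, (Real.log (outLaw chan (inputOne f1 j ω) (inputTwo f2 j ω) (ω.2 j).2) -
        Real.log (outLawGiven chan (avgInput pS chan f1 f2) (inputTwo f2 j ω) (ω.2 j).2)) := by
  have hμ : twMeasureAdaptive pS chan m n f1 f2 ω = (∏ i, pS (ω.1 i)) *
    ∏ j, chan (inputOne f1 j ω) (inputTwo f2 j ω) (ω.2 j) := rfl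
  have hne := hω.ne'
  rw [hμ] at hne
  have hs : ∀ i, 0 < pS (ω.1 i) := fun i => (hpS.1 _).lt_of_ne' <|
    Finset.prod_ne_zero_iff.1 (left_ne_zero_of_mul hne) i (Finset.mem_univ i)
  have hc : ∀ j, 0 < chan (inputOne f1 j ω) (inputTwo f2 j ω) (ω.2 j) := fun j =>
    ((hchan _ _).1 _).lt_of_ne' <|
      Finset.prod_ne_zero_iff.1 (right_ne_zero_of_mul hne) j (Finset.mem_univ j)
  have hp2 : ∀ i, 0 < prD pS (fun s => s.2) (ω.1 i).2 := fun i =>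
    prD_pos hpS.1 (fun s => s.2) (hs i)
  have hW : ∀ j, 0 < outLaw chan (inputOne f1 j ω) (inputTwo f2 j ω) (ω.2 j).2 := fun j =>
    outLaw_pos hchan (hc j)
  have hQ : ∀ j, 0 < outLawGiven chan (avgInput pS chan f1 f2) (inputTwo f2 j ω)
      (ω.2 j).2 := fun j =>
    outLawGiven_pos hchan (avgInput_nonneg f1 f2 hpS hchan)
      (z := ((inputOne f1 j ω, inputTwo f2 j ω), ω.2 j))
      (mul_pos (avgInput_pos f1 f2 hpS hchan hω j) (hc j))
  have hG := guess_pos h0 h1 g2 (fun i => (ω.1 i).2) (fun j => (ω.2 j).2)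
    (fun i => (ω.1 i).1)
  have hP1 := Finset.prod_pos fun i (_ : i ∈ Finset.univ) => hp2 i
  have hP2 := Finset.prod_pos fun j (_ : j ∈ Finset.univ) => hQ j
  have hP3 := Finset.prod_pos fun j (_ : j ∈ Finset.univ) => div_pos (hc j) (hW j)
  have hP4 := Finset.prod_pos fun i (_ : i ∈ Finset.univ) => hs i
  have hP5 := Finset.prod_pos fun j (_ : j ∈ Finset.univ) => hc j
  refine ⟨mul_pos (mul_pos (mul_pos hP1 hP2) hG) hP3, ?_⟩
  rw [hμ, refMeasure, Real.log_mul (mul_pos (mul_pos hP1 hP2) hG).ne' hP3.ne',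
    Real.log_mul (mul_pos hP1 hP2).ne' hG.ne', Real.log_mul hP1.ne' hP2.ne',
    Real.log_mul hP4.ne' hP5.ne', Real.log_prod fun i _ => (hp2 i).ne',
    Real.log_prod fun j _ => (hQ j).ne', Real.log_prod fun j _ => (div_pos (hc j) (hW j)).ne',
    Real.log_prod fun i _ => (hs i).ne', Real.log_prod fun j _ => (hc j).ne',
    Finset.sum_congr rfl fun j _ => Real.log_div (hc j).ne' (hW j).ne']
  simp only [Finset.sum_sub_distrib]
  ring

/-- The converse for the first user's source at finite block length. -/
lemma condEnt_le_of_twErrAdaptive_lt {b : ℝ} (hm : 0 < m) (hn : 0 < n) (hb : (n : ℝ) = b * m)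
    (hpS : IsPmf pS) (hchan : ∀ x1 x2, IsPmf (chan x1 x2))
    (g1 : (Fin m → S1) → (Fin n → Y1) → Fin m → S2)
    (g2 : (Fin m → S2) → (Fin n → Y2) → Fin m → S1)
    {ε : ℝ} (h0 : 0 < ε) (h1 : ε < 1)
    (herr : twErrAdaptive pS chan m n f1 f2 g1 g2 < ε) :
    condEnt pS (fun s => s.1) (fun s => s.2) ≤
      b * condMutInf (letterLaw chan (avgInput pS chan f1 f2)) (fun z => z.1.1)
        (fun z => z.2.2) (fun z => z.1.2) + slack (Fintype.card S1) ε := by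
  have hne : Nonempty (S1 × S2) := by
    by_contra h
    rw [not_nonempty_iff] at h
    simpa using hpS.2
  have : Nonempty S1 := hne.map Prod.fst
  have hμ := twMeasureAdaptive_nonneg f1 f2 hpS hchan
  have hμ1 := sum_twMeasureAdaptive f1 f2 hpS hchan
  set μ := twMeasureAdaptive pS chan m n f1 f2
  set L : ℝ := -Real.log ε + m * Real.log (Fintype.card S1) with hL
  have hL0 : 0 ≤ L := add_nonneg (neg_nonneg.2 (Real.log_nonpos h0.le h1.le))
    (mul_nonneg (by positivity) (Real.log_natCast_nonneg _))
  have hgibbs := gibbs μ (refMeasure pS chan f1 f2 g2 ε) hμ hμ1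
    (fun ω => mul_nonneg (mul_nonneg (mul_nonneg
      (Finset.prod_nonneg fun _ _ => prD_nonneg hpS.1 _ _)
      (Finset.prod_nonneg fun _ _ =>
        outLawGiven_nonneg hchan (avgInput_nonneg f1 f2 hpS hchan) _ _))
      (guess_pos h0 h1 _ _ _ _).le)
      (Finset.prod_nonneg fun _ _ => div_nonneg ((hchan _ _).1 _) (outLaw_nonneg hchan _ _ _)))
    (sum_refMeasure_le_one f1 f2 hpS hchan g2 h0 h1)
    (fun ω hω => (log_refMeasure_sub f1 f2 hpS hchan g2 h0 h1 hω).1)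
  have hsplit : ∀ ω, μ ω * (Real.log (refMeasure pS chan f1 f2 g2 ε ω) - Real.log (μ ω)) =
      μ ω * ∑ i, (Real.log (prD pS (fun s => s.2) (ω.1 i).2) - Real.log (pS (ω.1 i))) +
      μ ω * Real.log (guess ε g2 (fun i => (ω.1 i).2) (fun j => (ω.2 j).2)
        (fun i => (ω.1 i).1)) -
      μ ω * ∑ j, (Real.log (outLaw chan (inputOne f1 j ω) (inputTwo f2 j ω) (ω.2 j).2) -
        Real.log (outLawGiven chan (avgInput pS chan f1 f2) (inputTwo f2 j ω)
          (ω.2 j).2)) := by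
    intro ω
    rcases (hμ ω).eq_or_lt with h | h
    · simp [← h]
    · rw [(log_refMeasure_sub f1 f2 hpS hchan g2 h0 h1 h).2]
      ring
  simp only [hsplit, Finset.sum_sub_distrib (s := (Finset.univ :
    Finset ((Fin m → S1 × S2) × (Fin n → Y1 × Y2)))), Finset.sum_add_distrib] at hgibbs
  have hsource := sum_twMeasureAdaptive_mul_sum_source f1 f2 hpS hchan
    fun s => Real.log (prD pS (fun s => s.2) s.2) - Real.log (pS s)
  have hletter := sum_twMeasureAdaptive_mul_sum_letter (pS := pS) f1 f2 hn hchan fun x y =>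
    Real.log (outLaw chan x.1 x.2 y.2) -
      Real.log (outLawGiven chan (avgInput pS chan f1 f2) x.2 y.2)
  have hH : condEnt pS (fun s => s.1) (fun s => s.2) =
      ∑ s, pS s * (Real.log (prD pS (fun s => s.2) s.2) - Real.log (pS s)) := by
    have hid : ∀ s, prD pS (fun s => (s.1, s.2)) s = pS s := fun s => by simp [prD]
    simp only [condEnt, ent_eq_sum, hid, mul_sub, Finset.sum_sub_distrib]
    ring
  have hI := condMutInf_letterLaw hchan (avgInput_nonneg f1 f2 hpS hchan)
  rw [← hH] at hsource
  rw [← hI] at hletter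
  have hguess : -∑ ω, μ ω * Real.log (guess ε g2 (fun i => (ω.1 i).2) (fun j => (ω.2 j).2)
      (fun i => (ω.1 i).1)) ≤ -Real.log (1 - ε) + ε * L := by
    have hpt : ∀ ω, -(μ ω * Real.log (guess ε g2 (fun i => (ω.1 i).2) (fun j => (ω.2 j).2)
        (fun i => (ω.1 i).1))) ≤ μ ω * -Real.log (1 - ε) + μ ω *
          (if g1 (fun i => (ω.1 i).1) (fun j => (ω.2 j).1) = (fun i => (ω.1 i).2)
        ∧ g2 (fun i => (ω.1 i).2) (fun j => (ω.2 j).2) = (fun i => (ω.1 i).1)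
      then 0 else 1) * L := fun ω => by
      have h := mul_le_mul_of_nonneg_left (neg_log_guess_le h0 h1 g2 (fun i => (ω.1 i).2)
        (fun j => (ω.2 j).2) (fun i => (ω.1 i).1)) (hμ ω)
      rw [mul_neg] at h
      refine h.trans ?_
      rw [mul_add, mul_assoc]
      refine add_le_add le_rfl ?_
      refine mul_le_mul_of_nonneg_left (mul_le_mul_of_nonneg_right ?_ hL0) (hμ ω)
      split_ifs with h1 h2 h2
      · rfl
      · simp
      · exact absurd h2.2 h1
      · rfl
    rw [← Finset.sum_neg_distrib]
    refine (Finset.sum_le_sum fun ω _ => hpt ω).trans ?_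
    rw [Finset.sum_add_distrib, ← Finset.sum_mul, ← Finset.sum_mul, hμ1, one_mul]
    gcongr
    exact herr.le
  have hm1 : (1 : ℝ) ≤ m := by exact_mod_cast hm
  have hlog := Real.log_nonpos (by linarith : 0 ≤ 1 - ε) (by linarith)
  have hlog' := mul_nonneg h0.le (neg_nonneg.2 (Real.log_nonpos h0.le h1.le))
  have hfin : m * condEnt pS (fun s => s.1) (fun s => s.2) ≤
      m * (b * condMutInf (letterLaw chan (avgInput pS chan f1 f2)) (fun z => z.1.1)
        (fun z => z.2.2) (fun z => z.1.2) + slack (Fintype.card S1) ε) := by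
    have e1 : m * (b * condMutInf (letterLaw chan (avgInput pS chan f1 f2)) (fun z => z.1.1)
        (fun z => z.2.2) (fun z => z.1.2)) = n * condMutInf
        (letterLaw chan (avgInput pS chan f1 f2)) (fun z => z.1.1)
        (fun z => z.2.2) (fun z => z.1.2) := by rw [hb]; ring
    rw [mul_add, e1, slack]
    rw [hL] at hguess
    nlinarith
  exact le_of_mul_le_mul_left hfin (by linarith)

end TwoWay

lemma tendsto_slack (M : ℕ) : Filter.Tendsto (slack M) (nhds 0) (nhds 0) := by
  have h1 : ContinuousAt (fun ε : ℝ => Real.log (1 - ε)) 0 :=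
    ContinuousAt.log (by fun_prop) (by norm_num)
  have h2 : ContinuousAt (fun ε : ℝ => ε * Real.log ε) 0 := Real.continuous_mul_log.continuousAt
  have h : ContinuousAt (slack M) 0 := by
    unfold slack
    exact h1.neg.add (h2.neg.add (by fun_prop))
  simpa [ContinuousAt, slack] using h

/-- (Shannon-type outer bound for the two-way channel with correlated
sources.) If source-channel rate `b` is achievable over the DM two-way channel
`p(y1,y2|x1,x2)` with general adaptive encoders, then there exists a joint input
distribution `p(x1,x2)` such that `H(S1|S2) ≤ b·I(X1;Y2|X2)` and
`H(S2|S1) ≤ b·I(X2;Y1|X1)`, where `(Y1,Y2)` is obtained from `(X1,X2)` through the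
per-letter channel law. -/
theorem two_way_outer_bound
    {S1 S2 X1 X2 Y1 Y2 : Type}
    [Fintype S1] [Fintype S2] [Fintype X1] [Fintype X2] [Fintype Y1] [Fintype Y2]
    (pS : S1 × S2 → ℝ) (hpS : IsPmf pS)
    (chan : X1 → X2 → Y1 × Y2 → ℝ) (hchan : ∀ x1 x2, IsPmf (chan x1 x2))
    (b : ℝ) (hach : twAchievableAdaptive pS chan b) :
    ∃ pX : X1 × X2 → ℝ, IsPmf pX ∧
      (condEnt pS (fun s => s.1) (fun s => s.2) ≤
        b * condMutInf (fun z : (X1 × X2) × (Y1 × Y2) => pX z.1 * chan z.1.1 z.1.2 z.2)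
          (fun z => z.1.1) (fun z => z.2.2) (fun z => z.1.2)) ∧
      (condEnt pS (fun s => s.2) (fun s => s.1) ≤
        b * condMutInf (fun z : (X1 × X2) × (Y1 × Y2) => pX z.1 * chan z.1.1 z.1.2 z.2)
          (fun z => z.1.2) (fun z => z.2.1) (fun z => z.1.1)) := by
  set I1 : (X1 × X2 → ℝ) → ℝ := fun pX => condMutInf (letterLaw chan pX)
    (fun z => z.1.1) (fun z => z.2.2) (fun z => z.1.2)
  set I2 : (X1 × X2 → ℝ) → ℝ := fun pX => condMutInf (letterLaw chan pX)
    (fun z => z.1.2) (fun z => z.2.1) (fun z => z.1.1)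
  set H1 := condEnt pS (fun s => s.1) (fun s => s.2)
  set H2 := condEnt pS (fun s => s.2) (fun s => s.1)
  have hc : ∀ z : (X1 × X2) × (Y1 × Y2), Continuous fun pX => letterLaw chan pX z := fun z => by
    unfold letterLaw
    fun_prop
  have hcont : Continuous fun pX => min (b * I1 pX - H1) (b * I2 pX - H2) :=
    ((continuous_const.mul (continuous_condMutInf _ hc _ _ _)).sub continuous_const).min
      ((continuous_const.mul (continuous_condMutInf _ hc _ _ _)).sub continuous_const)
  have happrox : ∀ ε : ℝ, 0 < ε → ε < 1 → ∃ pX : X1 × X2 → ℝ, IsPmf pX ∧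
      H1 ≤ b * I1 pX + slack (Fintype.card S1) ε ∧
      H2 ≤ b * I2 pX + slack (Fintype.card S2) ε := by
    intro ε h0 h1
    obtain ⟨m, n, hm, hn, hb, f1, f2, g1, g2, herr⟩ := hach ε h0
    refine ⟨avgInput pS chan f1 f2, isPmf_avgInput f1 f2 hn hpS hchan,
      condEnt_le_of_twErrAdaptive_lt f1 f2 hm hn hb hpS hchan g1 g2 h0 h1 herr, ?_⟩
    have hpS' : IsPmf fun s : S2 × S1 => pS s.swap :=
      ⟨fun _ => hpS.1 _, ((Equiv.prodComm S2 S1).sum_comp pS).trans hpS.2⟩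
    have hchan' : ∀ x2 x1, IsPmf fun y : Y2 × Y1 => chan x1 x2 y.swap := fun x2 x1 =>
      ⟨fun _ => (hchan _ _).1 _,
        ((Equiv.prodComm Y2 Y1).sum_comp (chan x1 x2)).trans (hchan x1 x2).2⟩
    let e : (Fin m → S2 × S1) × (Fin n → Y2 × Y1) ≃ (Fin m → S1 × S2) × (Fin n → Y1 × Y2) :=
      (Equiv.arrowCongr (Equiv.refl _) (Equiv.prodComm S2 S1)).prodCongr
        (Equiv.arrowCongr (Equiv.refl _) (Equiv.prodComm Y2 Y1))
    have hμ : ∀ ω, twMeasureAdaptive (fun s : S2 × S1 => pS s.swap)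
        (fun x2 x1 y => chan x1 x2 y.swap) m n f2 f1 ω =
          twMeasureAdaptive pS chan m n f1 f2 (e ω) := fun ω => rfl
    have herr' : twErrAdaptive (fun s : S2 × S1 => pS s.swap)
        (fun x2 x1 y => chan x1 x2 y.swap) m n f2 f1 g2 g1 < ε := by
      refine lt_of_eq_of_lt ?_ herr
      unfold twErrAdaptive
      rw [← e.sum_comp]
      refine Finset.sum_congr rfl fun ω _ => ?_
      rw [hμ]
      congr 1
      exact if_congr and_comm rfl rfl
    have hav : ∀ x, avgInput (fun s : S2 × S1 => pS s.swap)
        (fun x2 x1 y => chan x1 x2 y.swap) f2 f1 x = avgInput pS chan f1 f2 x.swap := by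
      rintro ⟨x2, x1⟩
      unfold avgInput
      congr 1
      refine Finset.sum_congr rfl fun j _ => ?_
      unfold prD
      rw [← e.sum_comp]
      refine Finset.sum_congr rfl fun ω _ => ?_
      rw [hμ]
      have hiff : (inputOne f2 j ω, inputTwo f1 j ω) = (x2, x1) ↔
          (inputOne f1 j (e ω), inputTwo f2 j (e ω)) = (x2, x1).swap := by
        simp only [Prod.swap_prod_mk, Prod.mk.injEq]
        exact and_comm
      dsimp only
      split_ifs with h1 h2 h2
      · rfl
      · exact absurd (hiff.1 h1) h2
      · exact absurd (hiff.2 h2) h1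
      · rfl
    have key := condEnt_le_of_twErrAdaptive_lt f2 f1 hm hn hb hpS' hchan' g2 g1 h0 h1 herr'
    have hlaw : letterLaw (fun x2 x1 (y : Y2 × Y1) => chan x1 x2 y.swap)
        (avgInput (fun s : S2 × S1 => pS s.swap)
          (fun x2 x1 y => chan x1 x2 y.swap) f2 f1) = fun z =>
        letterLaw chan (avgInput pS chan f1 f2)
          ((Equiv.prodComm X2 X1).prodCongr (Equiv.prodComm Y2 Y1) z) := by
      funext z
      simp only [letterLaw, hav]
      rfl
    rw [hlaw] at key
    have hI := condMutInf_comp_equiv ((Equiv.prodComm X2 X1).prodCongr (Equiv.prodComm Y2 Y1))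
      (letterLaw chan (avgInput pS chan f1 f2))
      (fun z => z.1.2) (fun z => z.2.1) (fun z => z.1.1)
    have hH := condEnt_comp_equiv (Equiv.prodComm S2 S1) pS (fun s => s.2) (fun s => s.1)
    exact (hH.symm.trans_le key).trans_eq (congrArg (fun t => b * t + _) hI)
  have hcompact : IsCompact {pX : X1 × X2 → ℝ | IsPmf pX} := isCompact_stdSimplex ℝ (X1 × X2)
  obtain ⟨p0, hp0, -⟩ := happrox (1 / 2) (by norm_num) (by norm_num)
  obtain ⟨pX, hpX, hmax⟩ := hcompact.exists_isMaxOn ⟨p0, hp0⟩ hcont.continuousOn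
  have hlim : 0 ≤ min (b * I1 pX - H1) (b * I2 pX - H2) := by
    have ht : Filter.Tendsto (fun ε => min (-slack (Fintype.card S1) ε)
        (-slack (Fintype.card S2) ε)) (nhdsWithin 0 (Set.Ioi 0)) (nhds 0) := by
      have := ((tendsto_slack (Fintype.card S1)).neg.min
        (tendsto_slack (Fintype.card S2)).neg).mono_left
          (nhdsWithin_le_nhds (s := Set.Ioi (0 : ℝ)))
      simpa using this
    refine le_of_tendsto ht ?_
    filter_upwards [Ioo_mem_nhdsGT (zero_lt_one (α := ℝ))] with ε hε
    obtain ⟨q, hq, h1, h2⟩ := happrox ε hε.1 hε.2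
    exact (min_le_min (by linarith) (by linarith)).trans (hmax hq)
  obtain ⟨h1, h2⟩ := le_min_iff.1 hlim
  exact ⟨pX, hpX, sub_nonneg.1 h1, sub_nonneg.1 h2⟩
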